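/- Let Γ be a hyperbolic group and |·| the word metric of a finite generating set, regarded as a left-invariant metric on Γ. Define d(x,y) = |x^{-1}y| + log(1 + |x^{-1}y|). Then d is a left-invariant metric on Γ satisfying |x^{-1}y| ≤ d(x,y) ≤ 2|x^{-1}y| (hence d is quasi-isometric to the word metric), but (Γ,d) is not Gromov hyperbolic. In particular, every hyperbolic group admits a left-invariant metric quasi-isometric to a word metric which is not hyperbolic. -/

import Mathlib

open Filter MeasureTheory Topology Metric Set
open scoped ENNReal

noncomputable section

namespace GHM

/-! ### Coarse geometry of distance functions -/

/-- The Gromov product `(x|y)_w` of `x` and `y` seen from `w`, for a distance function `d`. -/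
def gromov {X : Type*} (d : X → X → ℝ) (w x y : X) : ℝ :=
  (d x w + d y w - d x y) / 2

/-- `d` is `δ`-hyperbolic (four point condition on Gromov products). -/
def IsHyperbolicWith {X : Type*} (d : X → X → ℝ) (δ : ℝ) : Prop :=
  ∀ w x y z : X, min (gromov d w x y) (gromov d w x z) - δ ≤ gromov d w y z

/-- `d` is Gromov hyperbolic. -/
def IsHyperbolic {X : Type*} (d : X → X → ℝ) : Prop :=
  ∃ δ : ℝ, 0 ≤ δ ∧ IsHyperbolicWith d δ

/-- `d` is a genuine metric. -/
structure IsMetricFun {X : Type*} (d : X → X → ℝ) : Prop where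
  refl : ∀ x, d x x = 0
  pos : ∀ x y, x ≠ y → 0 < d x y
  symm : ∀ x y, d x y = d y x
  triangle : ∀ x y z, d x z ≤ d x y + d y z

/-- `f` is a `(Λ,c)`-quasi-isometric embedding from `(X,dX)` to `(Y,dY)`. -/
def QIEmbed {X Y : Type*} (dX : X → X → ℝ) (dY : Y → Y → ℝ)
    (f : X → Y) (Λ c : ℝ) : Prop :=
  ∀ x x' : X, dX x x' / Λ - c ≤ dY (f x) (f x') ∧ dY (f x) (f x') ≤ Λ * dX x x' + c

/-- `(X,dX)` and `(Y,dY)` are quasi-isometric. -/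
def QuasiIsometric {X Y : Type*} (dX : X → X → ℝ) (dY : Y → Y → ℝ) : Prop :=
  ∃ (f : X → Y) (Λ c C : ℝ), 1 ≤ Λ ∧ 0 ≤ c ∧ 0 ≤ C ∧
    QIEmbed dX dY f Λ c ∧ ∀ y : Y, ∃ x : X, dY (f x) y ≤ C

variable {G : Type*} [Group G]

/-- Word length of `g` with respect to the (symmetrized) finite set `S`. -/
def wordLength (S : Finset G) (g : G) : ℕ :=
  sInf {n : ℕ | ∃ l : List G, l.length = n ∧ (∀ a ∈ l, a ∈ S ∨ a⁻¹ ∈ S) ∧ l.prod = g}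

/-- The word metric associated with a finite generating set `S`. -/
def wordDist (S : Finset G) (x y : G) : ℝ := wordLength S (x⁻¹ * y)

/-- `S` generates the group. -/
def Generates (S : Finset G) : Prop := Subgroup.closure (S : Set G) = ⊤

/-- The standard metric on `ℤ`. -/
def intDist (m n : ℤ) : ℝ := |(m : ℝ) - (n : ℝ)|

/-- `G` is a non-elementary hyperbolic group: finitely generated, its word metrics are
Gromov hyperbolic, it is infinite, and it is not quasi-isometric to `ℤ`. -/
def NonElemHyperbolic (G : Type*) [Group G] : Prop :=
  Infinite G ∧ (∃ S : Finset G, Generates S) ∧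
    ∀ S : Finset G, Generates S →
      IsHyperbolic (wordDist S) ∧ ¬ QuasiIsometric (wordDist S) intDist

/-- `d` is invariant under left translations. -/
def LeftInvariant (d : G → G → ℝ) : Prop := ∀ g x y : G, d (g * x) (g * y) = d x y

/-- `d` belongs to the class `𝒟(Γ)`: it is a left-invariant Gromov hyperbolic metric on the
group, quasi-isometric to a word metric of a finite generating set. -/
def MemD (d : G → G → ℝ) : Prop :=
  IsMetricFun d ∧ LeftInvariant d ∧ IsHyperbolic d ∧
    ∃ S : Finset G, Generates S ∧ QuasiIsometric d (wordDist S)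

/-! ### Random walks -/

/-- `μ` is (the density of) a probability measure on the (countable) group. -/
def IsProbDensity (μ : G → ℝ) : Prop := (∀ g, 0 ≤ μ g) ∧ HasSum μ 1

/-- `μ` is symmetric. -/
def IsSymmetric (μ : G → ℝ) : Prop := ∀ g : G, μ g⁻¹ = μ g

/-- The support of `μ` generates `G`. -/
def GeneratesSupp (μ : G → ℝ) : Prop := Subgroup.closure {g : G | μ g ≠ 0} = ⊤

open scoped Classical in
/-- Convolution powers `μ^n` of `μ`. -/
def convPow (μ : G → ℝ) : ℕ → G → ℝ
  | 0 => fun g => if g = 1 then 1 else 0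
  | n + 1 => fun g => ∑' y : G, convPow μ n y * μ (y⁻¹ * g)

/-- The Green function `G(x,y) = ∑_n μ^n(x⁻¹y)`. -/
def greenFn (μ : G → ℝ) (x y : G) : ℝ := ∑' n : ℕ, convPow μ n (x⁻¹ * y)

/-- The random walk is transient, i.e. `G(e,e) = ∑_n μ^n(e) < ∞`. -/
def Transient (μ : G → ℝ) : Prop := Summable fun n : ℕ => convPow μ n (1 : G)

/-- Successive positions of a walk started at `x` with increments `l`. -/
def walkPositions (x : G) (l : List G) : List G := l.scanl (fun p a => p * a) x

/-- The increments `l` describe a trajectory from `x` which hits `y` for the first time at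
its final position. -/
def IsFirstHitPath (x y : G) (l : List G) : Prop :=
  (walkPositions x l).getLast? = some y ∧ y ∉ (walkPositions x l).dropLast

/-- `F(x,y)`: the probability that the `μ`-random walk started at `x` ever hits `y`. -/
def hitProb (μ : G → ℝ) (x y : G) : ℝ :=
  ∑' l : {l : List G // IsFirstHitPath x y l}, ((l : List G).map μ).prod

/-- The Green metric `d_G(x,y) = - log F(x,y)`. -/
def greenDist (μ : G → ℝ) (x y : G) : ℝ := - Real.log (hitProb μ x y)

/-- `μ` has a finite first moment with respect to `d`. -/
def FiniteFirstMoment (d : G → G → ℝ) (μ : G → ℝ) : Prop :=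
  Summable fun g : G => d 1 g * μ g

/-- `μ` has an exponential moment with respect to `d`. -/
def HasExpMoment (d : G → G → ℝ) (μ : G → ℝ) : Prop :=
  ∃ lam : ℝ, 0 < lam ∧ Summable fun g : G => Real.exp (lam * d 1 g) * μ g

/-- The entropy `H(μ^n) = -∑_γ μ^n(γ) log μ^n(γ)` of the `n`-th convolution power. -/
def entropyAt (μ : G → ℝ) (n : ℕ) : ℝ :=
  - ∑' g : G, convPow μ n g * Real.log (convPow μ n g)

/-- `h` is the asymptotic entropy of the walk. -/
def HasEntropy (μ : G → ℝ) (h : ℝ) : Prop :=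
  Tendsto (fun n : ℕ => entropyAt μ n / n) atTop (𝓝 h)

/-- `v` is the logarithmic volume growth of `(G,d)` (seen from the identity). -/
def HasGrowth (d : G → G → ℝ) (v : ℝ) : Prop :=
  Filter.limsup (fun R : ℝ => Real.log (Nat.card {g : G // d 1 g ≤ R}) / R) atTop = v

/-- The position `Z_n = ω_0 ω_1 ⋯ ω_{n-1}` of the random walk at time `n`, given the
sequence of increments `ω`. -/
def walkPos (n : ℕ) (ω : ℕ → G) : G := ((List.range n).map ω).prod

/-- `P` is the law on the space of increment sequences of an i.i.d. sequence of law `μ`: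
cylinders have product measure.  (This characterizes the path measure of the random walk.) -/
def IsWalkMeasure [MeasurableSpace G] (μ : G → ℝ) (P : Measure (ℕ → G)) : Prop :=
  IsProbabilityMeasure P ∧
    ∀ (n : ℕ) (g : Fin n → G),
      P {ω : ℕ → G | ∀ i : Fin n, ω (i : ℕ) = g i} = ∏ i : Fin n, ENNReal.ofReal (μ (g i))

/-! ### The Gromov boundary, visual metrics, harmonic and quasiconformal measures -/

/-- A sequence tends to infinity if Gromov products (at the base point `1`) go to `∞`. -/
def TendstoInfinity (d : G → G → ℝ) (u : ℕ → G) : Prop :=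
  Tendsto (fun p : ℕ × ℕ => gromov d 1 (u p.1) (u p.2)) atTop atTop

/-- A realization of the Gromov boundary of `(G,d)` as an abstract type `B`:
`conv u b` means that the sequence `u` converges at infinity to the boundary point `b`.
The group acts on its boundary by `smul`. -/
structure BoundaryData (G : Type*) [Group G] (d : G → G → ℝ) (B : Type*) where
  conv : (ℕ → G) → B → Prop
  smul : G → B → B
  conv_unique : ∀ u b b', conv u b → conv u b' → b = b'
  exists_conv : ∀ u, TendstoInfinity d u → ∃ b, conv u b
  conv_tendstoInfinity : ∀ u b, conv u b → TendstoInfinity d u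
  conv_iff : ∀ u v b, conv u b →
    (conv v b ↔ Tendsto (fun n => gromov d 1 (u n) (v n)) atTop atTop)
  conv_surj : ∀ b, ∃ u, conv u b
  smul_conv : ∀ (γ : G) (u) (b), conv u b → conv (fun n => γ * u n) (smul γ b)

/-- Asymptotic Gromov product of two sequences. -/
def seqGromov (d : G → G → ℝ) (u v : ℕ → G) : ℝ :=
  Filter.liminf (fun n => gromov d 1 (u n) (v n)) atTop

/-- The metric of `B` is a visual metric of parameter `ε` (with comparison constant `C`)
for the hyperbolic distance `d` on the group:  `dist(a,b) ≍ exp(-ε (a|b))`. -/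
def IsVisualMetric {B : Type*} [MetricSpace B] (d : G → G → ℝ)
    (bd : BoundaryData G d B) (ε C : ℝ) : Prop :=
  0 < ε ∧ 0 < C ∧
    ∀ u v b b', bd.conv u b → bd.conv v b' → b ≠ b' →
      dist b b' ≤ C * Real.exp (-ε * seqGromov d u v) ∧
      Real.exp (-ε * seqGromov d u v) ≤ C * dist b b'

/-- `ν` is the harmonic measure of the random walk of law `μ` on the boundary `B`:
it is the law of the almost sure limit `Z_∞` of the walk on the boundary. -/
def IsHarmonicMeasure {B : Type*} [MeasurableSpace G] [MeasurableSpace B]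
    (d : G → G → ℝ) (bd : BoundaryData G d B) (μ : G → ℝ)
    (P : Measure (ℕ → G)) (ν : Measure B) : Prop :=
  IsWalkMeasure μ P ∧
    ∃ Zinf : (ℕ → G) → B, Measurable Zinf ∧
      (∀ᵐ ω ∂P, bd.conv (fun n => walkPos n ω) (Zinf ω)) ∧ ν = P.map Zinf

/-- Busemann function `β_b(x,y)` of the boundary point `b`. -/
def busemann {B : Type*} (d : G → G → ℝ) (bd : BoundaryData G d B)
    (x y : G) (b : B) : ℝ :=
  sSup {t : ℝ | ∃ u, bd.conv u b ∧
    t = Filter.limsup (fun n => d x (u n) - d y (u n)) atTop}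

/-- The image measure `γ^*ρ`, `γ^*ρ(A) = ρ(γA)`. -/
def actPush {B : Type*} [MeasurableSpace B] {d : G → G → ℝ}
    (bd : BoundaryData G d B) (γ : G) (ρ : Measure B) : Measure B :=
  ρ.map (bd.smul γ⁻¹)

/-- `ρ` is a quasiconformal measure on the boundary for `(G,d)` of logarithmic growth
parameter `v`: `γ^*ρ` and `ρ` are mutually absolutely continuous, with density
`dγ^*ρ/dρ ≍ exp (v β_b(1,γ⁻¹))` (uniformly in `γ`). -/
def IsQuasiconformalMeasure {B : Type*} [MeasurableSpace B] {d : G → G → ℝ}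
    (bd : BoundaryData G d B) (ρ : Measure B) (v : ℝ) : Prop :=
  ∃ C : ℝ, 0 < C ∧ ∀ γ : G,
    actPush bd γ ρ ≪ ρ ∧ ρ ≪ actPush bd γ ρ ∧
      ∀ᵐ b ∂ρ,
        (actPush bd γ ρ).rnDeriv ρ b
            ≤ ENNReal.ofReal (C * Real.exp (v * busemann d bd 1 γ⁻¹ b)) ∧
        ENNReal.ofReal (C⁻¹ * Real.exp (v * busemann d bd 1 γ⁻¹ b))
            ≤ (actPush bd γ ρ).rnDeriv ρ b

/-- `ν` is Ahlfors regular of dimension `α`: `ν(B(b,r)) ≍ r^α`. -/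
def AhlforsRegularOfDim {B : Type*} [MetricSpace B] [MeasurableSpace B]
    (ν : Measure B) (α : ℝ) : Prop :=
  ∃ C : ℝ, 0 < C ∧ ∀ (b : B) (r : ℝ), 0 < r → r ≤ Metric.diam (Set.univ : Set B) →
    ENNReal.ofReal (C⁻¹ * r ^ α) ≤ ν (Metric.ball b r) ∧
      ν (Metric.ball b r) ≤ ENNReal.ofReal (C * r ^ α)

/-- The Hausdorff dimension of a measure: the infimum of the Hausdorff dimensions of sets of
full measure. -/
def measureDim {B : Type*} [EMetricSpace B] [MeasurableSpace B] (ν : Measure B) : ℝ≥0∞ :=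
  ⨅ (A : Set B) (_ : ν Aᶜ = 0), dimH A

/-! ### Word geodesics -/

/-- `p 0, …, p n` is a geodesic segment for the word metric of `S`. -/
def IsWordGeodesic (S : Finset G) (n : ℕ) (p : ℕ → G) : Prop :=
  ∀ i j : ℕ, i ≤ n → j ≤ n → wordDist S (p i) (p j) = |(i : ℝ) - (j : ℝ)|

/-- `v` lies within distance `r` of some word geodesic segment from `x` to `y`. -/
def NearWordGeodesic (S : Finset G) (x y v : G) (r : ℝ) : Prop :=
  ∃ (n : ℕ) (p : ℕ → G), IsWordGeodesic S n p ∧ p 0 = x ∧ p n = y ∧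
    ∃ i ≤ n, wordDist S v (p i) ≤ r

/-! ### Martin boundary -/

/-- The Martin kernel `K(x,y) = G(x,y)/G(e,y)`. -/
def martinKernel (μ : G → ℝ) (x y : G) : ℝ := greenFn μ x y / greenFn μ 1 y

/-- The embedding `y ↦ K(·,y)` of the group in `C(G)` (pointwise topology). -/
def martinMap (μ : G → ℝ) (y : G) : G → ℝ := fun x => martinKernel μ x y

/-- The Martin boundary: the boundary of the image of the group under the Martin embedding
in the space of functions with the topology of pointwise convergence. -/
def martinBoundary (μ : G → ℝ) : Set (G → ℝ) :=
  closure (Set.range (martinMap μ)) \ Set.range (martinMap μ)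

/-- `h` is a `μ`-harmonic function. -/
def IsHarmonicFn (μ : G → ℝ) (h : G → ℝ) : Prop :=
  ∀ x : G, h x = ∑' y : G, h y * μ (x⁻¹ * y)

/-- `h` is a minimal positive harmonic function. -/
def IsMinimalHarmonic (μ : G → ℝ) (h : G → ℝ) : Prop :=
  IsHarmonicFn μ h ∧ (∀ x, 0 < h x) ∧
    ∀ u : G → ℝ, IsHarmonicFn μ u → (∀ x, 0 ≤ u x) → (∀ x, u x ≤ h x) →
      ∃ c : ℝ, u = fun x => c * h x

/-! ### Metric space versions (geodesic and quasiruled spaces) -/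

/-- A geodesic metric space. -/
def IsGeodesicSpace (X : Type*) [MetricSpace X] : Prop :=
  ∀ x y : X, ∃ f : ℝ → X, f 0 = x ∧ f (dist x y) = y ∧
    ∀ s ∈ Set.Icc (0:ℝ) (dist x y), ∀ t ∈ Set.Icc (0:ℝ) (dist x y),
      dist (f s) (f t) = |s - t|

/-- `f : [a,b] → Y` is a `(Λ,c)`-quasigeodesic segment. -/
def IsQuasigeodesicOn {Y : Type*} [MetricSpace Y] (f : ℝ → Y) (a b Λ c : ℝ) : Prop :=
  ∀ s ∈ Set.Icc a b, ∀ t ∈ Set.Icc a b,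
    |s - t| / Λ - c ≤ dist (f s) (f t) ∧ dist (f s) (f t) ≤ Λ * |s - t| + c

/-- `f : [a,b] → Y` is a `τ`-quasiruler: Gromov products of triples along it are `≤ τ`. -/
def IsQuasirulerOn {Y : Type*} [MetricSpace Y] (f : ℝ → Y) (a b τ : ℝ) : Prop :=
  ∀ s t u : ℝ, s ∈ Set.Icc a b → t ∈ Set.Icc a b → u ∈ Set.Icc a b → s ≤ t → t ≤ u →
    dist (f s) (f t) + dist (f t) (f u) ≤ dist (f s) (f u) + 2 * τ

/-- A quasiruled metric space: for some constants `(Λ,c,τ)` every pair of points is joined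
by a `(Λ,c)`-quasigeodesic, and every `(Λ,c)`-quasigeodesic is a `τ`-quasiruler. -/
def Quasiruled (Y : Type*) [MetricSpace Y] : Prop :=
  ∃ Λ c τ : ℝ, 1 ≤ Λ ∧ 0 ≤ c ∧ 0 ≤ τ ∧
    (∀ x y : Y, ∃ (a b : ℝ) (f : ℝ → Y), a ≤ b ∧ f a = x ∧ f b = y ∧
      IsQuasigeodesicOn f a b Λ c) ∧
    ∀ (f : ℝ → Y) (a b : ℝ), IsQuasigeodesicOn f a b Λ c → IsQuasirulerOn f a b τ

/-- A metric space is hyperbolic. -/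
def HypSpace (Y : Type*) [MetricSpace Y] : Prop :=
  IsHyperbolic (fun x y : Y => dist x y)

/-- `f` is a quasi-isometry between metric spaces. -/
def MetricQI {X Y : Type*} [MetricSpace X] [MetricSpace Y] (f : X → Y) : Prop :=
  ∃ Λ c C : ℝ, 1 ≤ Λ ∧ 0 ≤ c ∧ 0 ≤ C ∧
    QIEmbed (fun a b : X => dist a b) (fun a b : Y => dist a b) f Λ c ∧
    ∀ y : Y, ∃ x : X, dist (f x) y ≤ C

/-! Adding `log (1 + d)` destroys hyperbolicity of any distance function `d` with arbitrarily long
discrete geodesics. Take points at positions `0`, `m²`, `m² + m`, `2m² + m` of a geodesic and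
compare, for `d + log (1 + d)`, the three ways of summing the distances over two disjoint pairs.
The interlaced pairing gives `2(m² + m) + 2 log (1 + m² + m)`. It exceeds the sum over the two
outer segments by at least `2m`, and the nested pairing, which has the same linear part, by at
least `log (m / 2)`, so the four-point condition fails for large `m`. In an infinite finitely
generated group long geodesics exist because balls are finite. -/

section AddLog

/-- The function `t ↦ t + log (1 + t)`, which is composed with a distance function. It is only
meaningful for `t > -1`. -/
def addLog (t : ℝ) : ℝ := t + Real.log (1 + t)

theorem addLog_zero : addLog 0 = 0 := by simp [addLog]

variable {s t : ℝ}

theorem self_le_addLog (ht : 0 ≤ t) : t ≤ addLog t :=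
  le_add_of_nonneg_right (Real.log_nonneg (by linarith))

theorem addLog_le_two_mul (ht : -1 < t) : addLog t ≤ 2 * t := by
  have hlog : Real.log (1 + t) ≤ 1 + t - 1 := Real.log_le_sub_one_of_pos (by linarith)
  unfold addLog
  linarith

theorem monotoneOn_addLog : MonotoneOn addLog (Ioi (-1)) := fun s hs _ _ hst =>
  have hs' : 0 < 1 + s := by linarith [mem_Ioi.1 hs]
  add_le_add hst (Real.log_le_log hs' (by linarith))

theorem addLog_add_le (hs : 0 ≤ s) (ht : 0 ≤ t) : addLog (s + t) ≤ addLog s + addLog t := by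
  have hlog : Real.log (1 + (s + t)) ≤ Real.log (1 + s) + Real.log (1 + t) := by
    rw [← Real.log_mul (by positivity) (by positivity)]
    exact Real.log_le_log (by positivity) (by nlinarith [mul_nonneg hs ht])
  unfold addLog
  linarith

theorem add_addLog_le (hs : 0 ≤ s) (ht : -1 < t) : s + addLog t ≤ addLog (t + s) := by
  have hlog : Real.log (1 + t) ≤ Real.log (1 + (t + s)) :=
    Real.log_le_log (by linarith) (by linarith)
  unfold addLog
  linarith

theorem addLog_add_addLog_add_log_le (ht : 0 < t) :
    addLog t + addLog (2 * t ^ 2 + t) + Real.log (t / 2) ≤ 2 * addLog (t ^ 2 + t) := by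
  have hlog : Real.log (1 + t) + Real.log (1 + (2 * t ^ 2 + t)) + Real.log (t / 2) ≤
      2 * Real.log (1 + (t ^ 2 + t)) := by
    rw [← Real.log_mul (by positivity) (by positivity),
      ← Real.log_mul (by positivity) (by positivity), ← Nat.cast_two, ← Real.log_pow]
    refine Real.log_le_log (by positivity) ?_
    push_cast
    calc (1 + t) * (1 + (2 * t ^ 2 + t)) * (t / 2)
        = (t ^ 2 + t) * (1 + (2 * t ^ 2 + t)) / 2 := by ring
      _ ≤ (1 + (t ^ 2 + t)) * (2 * (1 + (t ^ 2 + t))) / 2 := by gcongr ?_ * ?_ / 2 <;> linarith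
      _ = (1 + (t ^ 2 + t)) ^ 2 := by ring
  unfold addLog
  linarith

end AddLog

section DistanceFunctions

variable {X : Type*} {d d' : X → X → ℝ}

theorem IsMetricFun.nonneg (hd : IsMetricFun d) (x y : X) : 0 ≤ d x y := by
  rcases eq_or_ne x y with rfl | hxy
  · exact (hd.refl x).ge
  · exact (hd.pos x y hxy).le

theorem IsMetricFun.comp (hd : IsMetricFun d) {f : ℝ → ℝ} (hf₀ : f 0 = 0)
    (hf_pos : ∀ t, 0 < t → 0 < f t) (hf_mono : MonotoneOn f (Ici 0))
    (hf_add : ∀ s t, 0 ≤ s → 0 ≤ t → f (s + t) ≤ f s + f t) :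
    IsMetricFun fun x y => f (d x y) where
  refl x := by rw [hd.refl, hf₀]
  pos x y hxy := hf_pos _ (hd.pos x y hxy)
  symm x y := by rw [hd.symm]
  triangle x y z :=
    (hf_mono (hd.nonneg x z) (add_nonneg (hd.nonneg x y) (hd.nonneg y z))
      (hd.triangle x y z)).trans (hf_add _ _ (hd.nonneg x y) (hd.nonneg y z))

theorem IsMetricFun.addLog (hd : IsMetricFun d) : IsMetricFun fun x y => addLog (d x y) :=
  hd.comp addLog_zero (fun _ ht => ht.trans_le (self_le_addLog ht.le))
    (monotoneOn_addLog.mono (Ici_subset_Ioi.2 (by norm_num))) fun _ _ => addLog_add_le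

theorem quasiIsometric_of_div_le_of_le_mul {Λ : ℝ} (hΛ : 1 ≤ Λ) (hd' : ∀ x, d' x x = 0)
    (h_lower : ∀ x y, d x y / Λ ≤ d' x y) (h_upper : ∀ x y, d' x y ≤ Λ * d x y) :
    QuasiIsometric d d' :=
  ⟨id, Λ, 0, 0, hΛ, le_rfl, le_rfl,
    fun x y => ⟨by simpa using h_lower x y, by simpa using h_upper x y⟩,
    fun x => ⟨x, (hd' x).le⟩⟩

theorem IsHyperbolicWith.four_point {δ : ℝ} (h : IsHyperbolicWith d δ) (w x y z : X) :
    d x w + d y z ≤ max (d x y + d z w) (d x z + d y w) + 2 * δ := by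
  have hw := h w x y z
  rw [sub_le_iff_le_add, min_le_iff] at hw
  rw [← sub_le_iff_le_add, le_max_iff]
  unfold gromov at hw
  exact hw.imp (fun _ => by linarith) (fun _ => by linarith)

/-- The points `p 0, …, p n` form a geodesic segment for `d`. For word metrics this is
`IsWordGeodesic`. -/
def IsDiscreteGeodesic (d : X → X → ℝ) (n : ℕ) (p : ℕ → X) : Prop :=
  ∀ i j : ℕ, i ≤ n → j ≤ n → d (p i) (p j) = |(i : ℝ) - (j : ℝ)|

variable {p : ℕ → X} {n : ℕ}

theorem IsDiscreteGeodesic.mono (hp : IsDiscreteGeodesic d n p) {k : ℕ} (hk : k ≤ n) :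
    IsDiscreteGeodesic d k p :=
  fun i j hi hj => hp i j (hi.trans hk) (hj.trans hk)

theorem IsDiscreteGeodesic.eq_natCast (hp : IsDiscreteGeodesic d n p) {i j k : ℕ}
    (hij : i + k = j) (hj : j ≤ n) : d (p i) (p j) = k ∧ d (p j) (p i) = k := by
  subst hij
  constructor <;> rw [hp _ _ (by lia) (by lia)] <;> simp

theorem IsMetricFun.le_sub_of_step_le_one (hd : IsMetricFun d)
    (h_step : ∀ i < n, d (p i) (p (i + 1)) ≤ 1) {i j : ℕ} (hij : i ≤ j) (hj : j ≤ n) :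
    d (p i) (p j) ≤ j - i := by
  induction j, hij using Nat.le_induction with
  | base => simp [hd.refl]
  | succ j _ ih =>
    have h_last := h_step j hj
    have h_triangle := hd.triangle (p i) (p j) (p (j + 1))
    push_cast
    linarith [ih (by lia)]

theorem IsMetricFun.isDiscreteGeodesic (hd : IsMetricFun d)
    (h_step : ∀ i < n, d (p i) (p (i + 1)) ≤ 1) (h_ends : n ≤ d (p 0) (p n)) :
    IsDiscreteGeodesic d n p := by
  have h_of_le : ∀ i j, i ≤ j → j ≤ n → d (p i) (p j) = j - i := fun i j hij hj => by
    refine (hd.le_sub_of_step_le_one h_step hij hj).antisymm ?_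
    have h_before := hd.le_sub_of_step_le_one h_step i.zero_le (hij.trans hj)
    have h_after := hd.le_sub_of_step_le_one h_step hj le_rfl
    have h_left := hd.triangle (p 0) (p i) (p n)
    have h_right := hd.triangle (p i) (p j) (p n)
    push_cast at h_before
    linarith
  intro i j hi hj
  rcases le_total i j with hij | hji
  · rw [h_of_le i j hij hj, abs_sub_comm, abs_of_nonneg (sub_nonneg.2 (Nat.cast_le.2 hij))]
  · rw [hd.symm, h_of_le j i hji hi, abs_of_nonneg (sub_nonneg.2 (Nat.cast_le.2 hji))]

theorem IsDiscreteGeodesic.four_point_of_isHyperbolicWith {a b : ℕ} {f : ℝ → ℝ} {δ : ℝ}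
    (hp : IsDiscreteGeodesic d (2 * a + b) p) (h : IsHyperbolicWith (fun x y => f (d x y)) δ) :
    2 * f (a + b) ≤ max (f b + f (2 * a + b)) (2 * f a) + 2 * δ := by
  have h_four := h.four_point (p 0) (p (a + b)) (p a) (p (2 * a + b))
  rw [(hp.eq_natCast (k := a + b) (by lia) (by lia)).2,
    (hp.eq_natCast (k := a + b) (by lia) le_rfl).1, (hp.eq_natCast (k := b) rfl (by lia)).2,
    (hp.eq_natCast (k := 2 * a + b) (by lia) le_rfl).2,
    (hp.eq_natCast (k := a) (by lia) le_rfl).1, (hp.eq_natCast (k := a) (by lia) (by lia)).2,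
    ← two_mul, ← two_mul] at h_four
  exact_mod_cast h_four

theorem IsDiscreteGeodesic.le_two_mul_exp_of_isHyperbolicWith {m : ℕ} {δ : ℝ}
    (hp : IsDiscreteGeodesic d (2 * m ^ 2 + m) p)
    (h : IsHyperbolicWith (fun x y => addLog (d x y)) δ) : m ≤ 2 * Real.exp (2 * δ) := by
  rcases m.eq_zero_or_pos with rfl | hm
  · simpa using (Real.exp_pos _).le
  have hm' : (0 : ℝ) < m := Nat.cast_pos.2 hm
  have h_four := hp.four_point_of_isHyperbolicWith h
  rw [← sub_le_iff_le_add, le_max_iff, Nat.cast_pow] at h_four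
  rcases h_four with h_nested | h_disjoint
  · have h_log : Real.log (m / 2) ≤ 2 * δ := by
      linarith [addLog_add_addLog_add_log_le hm']
    linarith [(Real.log_le_iff_le_exp (by positivity)).1 h_log]
  · have h_linear : (m : ℝ) ≤ δ := by
      linarith [add_addLog_le hm'.le (t := (m : ℝ) ^ 2) (by linarith [sq_nonneg (m : ℝ)])]
    linarith [Real.add_one_le_exp (2 * δ)]

theorem not_isHyperbolic_addLog (h : ∀ n, ∃ p, IsDiscreteGeodesic d n p) :
    ¬ IsHyperbolic fun x y => addLog (d x y) := by
  rintro ⟨δ, -, hδ⟩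
  obtain ⟨m, hm⟩ := exists_nat_gt (2 * Real.exp (2 * δ))
  obtain ⟨p, hp⟩ := h (2 * m ^ 2 + m)
  exact hm.not_ge (hp.le_two_mul_exp_of_isHyperbolicWith hδ)

end DistanceFunctions

section WordMetric

variable {S : Finset G}

theorem wordLength_prod_le_length {l : List G} (hl : ∀ a ∈ l, a ∈ S ∨ a⁻¹ ∈ S) :
    wordLength S l.prod ≤ l.length :=
  Nat.sInf_le ⟨l, rfl, hl, rfl⟩

theorem wordLength_one (S : Finset G) : wordLength S 1 = 0 := by
  simpa using wordLength_prod_le_length (S := S) (l := []) (by simp)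

theorem leftInvariant_wordDist (S : Finset G) : LeftInvariant (wordDist S) := fun g x y => by
  simp only [wordDist, mul_inv_rev, mul_assoc, inv_mul_cancel_left]

namespace Generates

theorem exists_list_length_eq (hS : Generates S) (g : G) :
    ∃ l : List G, l.length = wordLength S g ∧ (∀ a ∈ l, a ∈ S ∨ a⁻¹ ∈ S) ∧ l.prod = g := by
  have hg : g ∈ Submonoid.closure ((S : Set G) ∪ (S : Set G)⁻¹) := by
    rw [← Subgroup.closure_toSubmonoid, show Subgroup.closure (S : Set G) = ⊤ from hS]
    trivial
  obtain ⟨l, hl, hprod⟩ := Submonoid.exists_list_of_mem_closure hg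
  exact Nat.sInf_mem (s := {n | ∃ l : List G, l.length = n ∧ (∀ a ∈ l, a ∈ S ∨ a⁻¹ ∈ S) ∧
    l.prod = g}) ⟨l.length, l, rfl, hl, hprod⟩

theorem wordLength_mul_le (hS : Generates S) (g h : G) :
    wordLength S (g * h) ≤ wordLength S g + wordLength S h := by
  obtain ⟨l, hl_length, hl, rfl⟩ := hS.exists_list_length_eq g
  obtain ⟨l', hl'_length, hl', rfl⟩ := hS.exists_list_length_eq h
  rw [← hl_length, ← hl'_length, ← List.prod_append, ← List.length_append]
  exact wordLength_prod_le_length (List.forall_mem_append.2 ⟨hl, hl'⟩)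

theorem wordLength_inv_le (hS : Generates S) (g : G) : wordLength S g⁻¹ ≤ wordLength S g := by
  obtain ⟨l, hl_length, hl, rfl⟩ := hS.exists_list_length_eq g
  rw [← hl_length, List.prod_inv_reverse, ← List.length_map (·⁻¹), ← List.length_reverse]
  refine wordLength_prod_le_length fun a ha => ?_
  obtain ⟨b, hb, rfl⟩ := List.mem_map.1 (List.mem_reverse.1 ha)
  simpa using (hl b hb).symm

theorem wordLength_inv (hS : Generates S) (g : G) : wordLength S g⁻¹ = wordLength S g :=
  (hS.wordLength_inv_le g).antisymm (by simpa using hS.wordLength_inv_le g⁻¹)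

theorem eq_one_of_wordLength_eq_zero (hS : Generates S) {g : G} (hg : wordLength S g = 0) :
    g = 1 := by
  obtain ⟨l, hl_length, -, rfl⟩ := hS.exists_list_length_eq g
  rw [List.length_eq_zero_iff.1 (hl_length.trans hg), List.prod_nil]

theorem isMetricFun_wordDist (hS : Generates S) : IsMetricFun (wordDist S) where
  refl x := by simp [wordDist, wordLength_one]
  pos x y hxy := Nat.cast_pos.2 <| Nat.pos_of_ne_zero fun h =>
    hxy (inv_mul_eq_one.1 (hS.eq_one_of_wordLength_eq_zero h))
  symm x y := by simp [wordDist, ← hS.wordLength_inv (x⁻¹ * y)]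
  triangle x y z := by
    have h := hS.wordLength_mul_le (x⁻¹ * y) (y⁻¹ * z)
    rw [mul_assoc, mul_inv_cancel_left] at h
    unfold wordDist
    exact_mod_cast h

theorem finite_setOf_wordLength_le (hS : Generates S) (n : ℕ) :
    {g : G | wordLength S g ≤ n}.Finite := by
  let T : Set G := S ∪ (S : Set G)⁻¹
  have : Finite T := S.finite_toSet.union S.finite_toSet.inv
  refine ((List.finite_length_le T n).image fun l => (l.map Subtype.val).prod).subset ?_
  intro g (hg : wordLength S g ≤ n)
  obtain ⟨l, hl_length, hl, hprod⟩ := hS.exists_list_length_eq g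
  lift l to List T using hl
  rw [← hl_length, List.length_map] at hg
  exact ⟨l, hg, hprod⟩

theorem exists_isWordGeodesic_one (hS : Generates S) (g : G) :
    ∃ p : ℕ → G, IsWordGeodesic S (wordLength S g) p ∧ p 0 = 1 ∧ p (wordLength S g) = g := by
  obtain ⟨l, hl_length, hl, rfl⟩ := hS.exists_list_length_eq g
  have h_last : (l.take (wordLength S l.prod)).prod = l.prod := by
    rw [← hl_length, List.take_length]
  refine ⟨fun i => (l.take i).prod, ?_, rfl, h_last⟩
  refine hS.isMetricFun_wordDist.isDiscreteGeodesic (fun i hi => ?_) ?_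
  · have hi' : i < l.length := hl_length ▸ hi
    have h_letter : wordLength S l[i] ≤ 1 := by
      simpa using wordLength_prod_le_length (S := S) (l := [l[i]])
        (by simpa using hl _ (List.getElem_mem hi'))
    simpa [wordDist, List.prod_take_succ l i hi'] using h_letter
  · simp [wordDist, h_last]

theorem exists_isWordGeodesic [Infinite G] (hS : Generates S) (n : ℕ) :
    ∃ p : ℕ → G, IsWordGeodesic S n p := by
  obtain ⟨g, hg⟩ := (hS.finite_setOf_wordLength_le n).exists_notMem
  obtain ⟨p, hp, -, -⟩ := hS.exists_isWordGeodesic_one g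
  exact ⟨p, IsDiscreteGeodesic.mono hp (not_le.1 hg).le⟩

end Generates

end WordMetric

theorem nonhyperbolic_invariant_metric_general
    {G : Type*} [Group G] [Infinite G]
    (S : Finset G) (hS : Generates S) :
    IsMetricFun (fun x y : G => wordDist S x y + Real.log (1 + wordDist S x y)) ∧
    LeftInvariant (fun x y : G => wordDist S x y + Real.log (1 + wordDist S x y)) ∧
    (∀ x y : G,
      wordDist S x y ≤ wordDist S x y + Real.log (1 + wordDist S x y) ∧
      wordDist S x y + Real.log (1 + wordDist S x y) ≤ 2 * wordDist S x y) ∧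
    QuasiIsometric (fun x y : G => wordDist S x y + Real.log (1 + wordDist S x y))
      (wordDist S) ∧
    ¬ IsHyperbolic (fun x y : G => wordDist S x y + Real.log (1 + wordDist S x y)) := by
  have hd := hS.isMetricFun_wordDist
  have h_bounds : ∀ x y : G, wordDist S x y ≤ addLog (wordDist S x y) ∧
      addLog (wordDist S x y) ≤ 2 * wordDist S x y := fun x y =>
    ⟨self_le_addLog (hd.nonneg x y), addLog_le_two_mul (by linarith [hd.nonneg x y])⟩
  have h_qi : QuasiIsometric (fun x y => addLog (wordDist S x y)) (wordDist S) :=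
    quasiIsometric_of_div_le_of_le_mul one_le_two hd.refl (fun x y => by linarith [h_bounds x y])
      fun x y => by linarith [h_bounds x y, hd.nonneg x y]
  exact ⟨hd.addLog, fun g x y => congrArg addLog (leftInvariant_wordDist S g x y), h_bounds, h_qi,
    not_isHyperbolic_addLog hS.exists_isWordGeodesic⟩

/-- **Proposition 1.12 / §A.5.**  On any (infinite) hyperbolic group, the left-invariant
metric `d(x,y) = |x⁻¹y| + log(1 + |x⁻¹y|)` is a metric quasi-isometric to the word metric
(indeed `|x⁻¹y| ≤ d(x,y) ≤ 2|x⁻¹y|`) which is not Gromov hyperbolic. -/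
theorem nonhyperbolic_invariant_metric
    {G : Type*} [Group G] [Infinite G]
    (S : Finset G) (hS : Generates S) (hhyp : IsHyperbolic (wordDist S)) :
    IsMetricFun (fun x y : G => wordDist S x y + Real.log (1 + wordDist S x y)) ∧
    LeftInvariant (fun x y : G => wordDist S x y + Real.log (1 + wordDist S x y)) ∧
    (∀ x y : G,
      wordDist S x y ≤ wordDist S x y + Real.log (1 + wordDist S x y) ∧
      wordDist S x y + Real.log (1 + wordDist S x y) ≤ 2 * wordDist S x y) ∧
    QuasiIsometric (fun x y : G => wordDist S x y + Real.log (1 + wordDist S x y))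
      (wordDist S) ∧
    ¬ IsHyperbolic (fun x y : G => wordDist S x y + Real.log (1 + wordDist S x y)) :=
  nonhyperbolic_invariant_metric_general S hS

end GHM
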